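/- Under assumptions (A1)–(A4), the operator H defined by (Hx)(t) = Q(t, x(t−g(t))) + ∑_{j=-∞}^{t−1} X(t)P X(j+1)⁻¹ Λ(j,x) − ∑_{j=t}^{∞} X(t)(I−P) X(j+1)⁻¹ Λ(j,x), where Λ(j,x) = (A(j)−I)Q(j, x(j−g(j))) + G(j, x(j), x(j−g(j))), maps the space 𝒜(ℝⁿ) of discrete almost automorphic functions ℤ → ℝⁿ into itself: if x ∈ 𝒜(ℝⁿ) then Hx ∈ 𝒜(ℝⁿ). -/

import Mathlib

open Filter Topology

/-- A function `f : ℤ → 𝕏` is discrete almost automorphic if for every sequence of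
integers there exist a subsequence `(k_n)` and a function `f̄` such that
`f(t + k_n) → f̄(t)` and `f̄(t − k_n) → f(t)` pointwise in `t`. -/
def DiscreteAlmostAutomorphic {𝕏 : Type*} [TopologicalSpace 𝕏] (f : ℤ → 𝕏) : Prop :=
  ∀ k' : ℕ → ℤ, ∃ (σ : ℕ → ℕ) (fbar : ℤ → 𝕏), StrictMono σ ∧
    (∀ t : ℤ, Tendsto (fun n => f (t + k' (σ n))) atTop (𝓝 (fbar t))) ∧
    (∀ t : ℤ, Tendsto (fun n => fbar (t - k' (σ n))) atTop (𝓝 (f t)))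

/-- `Λ(j,x) = (A(j) − I) Q(j, x(j − g(j))) + G(j, x(j), x(j − g(j)))`. -/
noncomputable def Lam {n : ℕ} (A : ℤ → (Fin n → ℝ) →L[ℝ] (Fin n → ℝ))
    (g : ℤ → ℤ) (Q : ℤ → (Fin n → ℝ) → Fin n → ℝ)
    (G : ℤ → (Fin n → ℝ) → (Fin n → ℝ) → Fin n → ℝ)
    (x : ℤ → Fin n → ℝ) (j : ℤ) : Fin n → ℝ :=
  (A j - 1) (Q j (x (j - g j))) + G j (x j) (x (j - g j))

/-- `(Hx)(t) = Q(t, x(t−g(t))) + ∑_{j=-∞}^{t−1} X(t) P X(j+1)⁻¹ Λ(j,x)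
  − ∑_{j=t}^{∞} X(t)(I−P) X(j+1)⁻¹ Λ(j,x)`, the sums being reindexed over `ℕ`
  via `j = t − 1 − m` and `j = t + m` respectively. -/
noncomputable def Hmap {n : ℕ} (A X Xinv : ℤ → (Fin n → ℝ) →L[ℝ] (Fin n → ℝ))
    (P : (Fin n → ℝ) →L[ℝ] (Fin n → ℝ)) (g : ℤ → ℤ)
    (Q : ℤ → (Fin n → ℝ) → Fin n → ℝ)
    (G : ℤ → (Fin n → ℝ) → (Fin n → ℝ) → Fin n → ℝ)
    (x : ℤ → Fin n → ℝ) (t : ℤ) : Fin n → ℝ :=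
  Q t (x (t - g t))
    + (∑' m : ℕ, (X t * P * Xinv (t - (m : ℤ))) (Lam A g Q G x (t - 1 - (m : ℤ))))
    - ∑' m : ℕ, (X t * (1 - P) * Xinv (t + (m : ℤ) + 1)) (Lam A g Q G x (t + (m : ℤ)))

/-! If translates of `y` are close wherever the corresponding translates of an almost automorphic
`f` are close, uniformly over all pairs of translates, then `y` is almost automorphic: along a
subsequence the translates of `y` are Cauchy, and the return limit `ybar (t - k n) → y t` is the
iterated limit of `y (t + (k m - k n))`, first in `m` and then in `n`.

For Green's sum take `f` to be the coefficients and the forcing. The difference of two translates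
is a bounded solution of a translated system whose forcing tends pointwise to zero; since Green's
sum gives the only bounded solution, dominated convergence makes the difference tend to zero. -/

open scoped Uniformity

section CurriedLimits

variable {α β X : Type*} [TopologicalSpace X] {l : Filter α} {m : Filter β}
  {u : α × β → X} {v : α → X} {z : X}

theorem tendsto_curry_of_iterated (hu : ∀ a, Tendsto (fun b => u (a, b)) m (𝓝 (v a)))
    (hv : Tendsto v l (𝓝 z)) : Tendsto u (l.curry m) (𝓝 z) := by
  rw [(nhds_basis_opens z).tendsto_right_iff]
  rintro s ⟨hzs, hs⟩
  rw [eventually_curry_iff]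
  filter_upwards [hv (hs.mem_nhds hzs)] with a ha
  exact hu a (hs.mem_nhds ha)

theorem tendsto_iterated_of_curry [RegularSpace X] [m.NeBot]
    (hu : ∀ a, Tendsto (fun b => u (a, b)) m (𝓝 (v a)))
    (huz : Tendsto u (l.curry m) (𝓝 z)) : Tendsto v l (𝓝 z) := by
  rw [(closed_nhds_basis z).tendsto_right_iff]
  rintro s ⟨hs, hs_closed⟩
  filter_upwards [eventually_curry_iff.1 (huz hs)] with a ha
  exact hs_closed.mem_of_tendsto (hu a) ha

end CurriedLimits

theorem tendsto_apply_of_tendsto_discrete {ι D X : Type*} [TopologicalSpace D]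
    [DiscreteTopology D] [TopologicalSpace X] {l : Filter ι} {F : ι → D → X} {F₀ : D → X}
    {u : ι → D} {d : D} (hF : ∀ d, Tendsto (fun i => F i d) l (𝓝 (F₀ d)))
    (hu : Tendsto u l (𝓝 d)) : Tendsto (fun i => F i (u i)) l (𝓝 (F₀ d)) := by
  rw [nhds_discrete, tendsto_pure] at hu
  refine (hF d).congr' ?_
  filter_upwards [hu] with i hi
  rw [hi]

/-- The uniformity on `ℤ` measuring how close two translates of `f` are in the topology of
pointwise convergence: the pullback of the product uniformity of `ℤ → X` along `k ↦ f (· + k)`. -/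
def translateUniformity {X : Type*} [UniformSpace X] (f : ℤ → X) : Filter (ℤ × ℤ) :=
  (𝓤 (ℤ → X)).comap fun p => (fun s => f (s + p.1), fun s => f (s + p.2))

theorem tendsto_translateUniformity {X : Type*} [UniformSpace X] (f : ℤ → X) (t : ℤ) :
    Tendsto (fun p : ℤ × ℤ => (f (t + p.1), f (t + p.2))) (translateUniformity f) (𝓤 X) :=
  Tendsto.comp (Pi.uniformContinuous_proj (fun _ : ℤ => X) t) tendsto_comap

theorem tendsto_sub_translateUniformity {E : Type*} [NormedAddCommGroup E] (f : ℤ → E) (t : ℤ) :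
    Tendsto (fun p : ℤ × ℤ => f (t + p.2) - f (t + p.1)) (translateUniformity f) (𝓝 0) := by
  have h := tendsto_translateUniformity f t
  rwa [uniformity_eq_comap_nhds_zero, tendsto_comap_iff] at h

namespace DiscreteAlmostAutomorphic

section Topological

variable {X Y : Type*} [TopologicalSpace X] [TopologicalSpace Y] {f : ℤ → X}

theorem prodMk {g : ℤ → Y} (hf : DiscreteAlmostAutomorphic f)
    (hg : DiscreteAlmostAutomorphic g) : DiscreteAlmostAutomorphic fun t => (f t, g t) := by
  intro k
  obtain ⟨σ, fbar, hσ, hfk, hfk'⟩ := hf k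
  obtain ⟨τ, gbar, hτ, hgk, hgk'⟩ := hg (k ∘ σ)
  exact ⟨σ ∘ τ, fun t => (fbar t, gbar t), hσ.comp hτ,
    fun t => ((hfk t).comp hτ.tendsto_atTop).prodMk_nhds (hgk t),
    fun t => ((hfk' t).comp hτ.tendsto_atTop).prodMk_nhds (hgk' t)⟩

theorem continuous_comp (hf : DiscreteAlmostAutomorphic f) {φ : X → Y} (hφ : Continuous φ) :
    DiscreteAlmostAutomorphic fun t => φ (f t) := by
  intro k
  obtain ⟨σ, fbar, hσ, hfk, hfk'⟩ := hf k
  exact ⟨σ, fun t => φ (fbar t), hσ, fun t => (hφ.tendsto _).comp (hfk t),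
    fun t => (hφ.tendsto _).comp (hfk' t)⟩

theorem comp_sub (hf : DiscreteAlmostAutomorphic f) {g : ℤ → ℤ}
    (hg : DiscreteAlmostAutomorphic g) : DiscreteAlmostAutomorphic fun t => f (t - g t) := by
  intro k
  obtain ⟨σ, fbar, hσ, hfk, hfk'⟩ := hf k
  obtain ⟨τ, gbar, hτ, hgk, hgk'⟩ := hg (k ∘ σ)
  refine ⟨σ ∘ τ, fun t => fbar (t - gbar t), hσ.comp hτ, fun t => ?_, fun t => ?_⟩
  · refine tendsto_apply_of_tendsto_discrete (F := fun n d => f (t + k (σ (τ n)) - d))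
      (F₀ := fun d => fbar (t - d)) (fun d => ?_) (hgk t)
    simpa only [Function.comp_def, sub_add_eq_add_sub] using
      (hfk (t - d)).comp hτ.tendsto_atTop
  · refine tendsto_apply_of_tendsto_discrete (F := fun n d => fbar (t - k (σ (τ n)) - d))
      (F₀ := fun d => f (t - d)) (fun d => ?_) (hgk' t)
    simpa only [Function.comp_def, sub_right_comm] using
      (hfk' (t - d)).comp hτ.tendsto_atTop

theorem tendsto_sub_of_tendsto_add [T2Space X] [FirstCountableTopology X]
    (hf : DiscreteAlmostAutomorphic f) {k : ℕ → ℤ} {fbar : ℤ → X}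
    (hk : ∀ t, Tendsto (fun n => f (t + k n)) atTop (𝓝 (fbar t))) (t : ℤ) :
    Tendsto (fun n => fbar (t - k n)) atTop (𝓝 (f t)) := by
  refine tendsto_of_subseq_tendsto fun ν hν => ?_
  obtain ⟨σ, fbar', hσ, hfk, hfk'⟩ := hf (k ∘ ν)
  obtain rfl : fbar' = fbar := funext fun s =>
    tendsto_nhds_unique (hfk s) ((hk s).comp (hν.comp hσ.tendsto_atTop))
  exact ⟨σ, hfk' t⟩

end Topological

theorem of_tendsto_translateUniformity {X Y : Type*} [UniformSpace X] [UniformSpace Y]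
    [CompleteSpace Y] {f : ℤ → X} {y : ℤ → Y} (hf : DiscreteAlmostAutomorphic f)
    (hy : ∀ t, Tendsto (fun p : ℤ × ℤ => (y (t + p.1), y (t + p.2)))
      (translateUniformity f) (𝓤 Y)) :
    DiscreteAlmostAutomorphic y := by
  intro k
  obtain ⟨σ, fbar, hσ, hfk, hfk'⟩ := hf k
  have hf_fwd : Tendsto (fun n s => f (s + k (σ n))) atTop (𝓝 fbar) := tendsto_pi_nhds.2 hfk
  have hf_back : Tendsto (fun n s => fbar (s - k (σ n))) atTop (𝓝 f) := tendsto_pi_nhds.2 hfk'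
  have hpairs : Tendsto (Prod.map (k ∘ σ) (k ∘ σ)) atTop (translateUniformity f) :=
    tendsto_comap_iff.2 (cauchySeq_iff_tendsto.1 hf_fwd.cauchySeq)
  have hy_cauchy (t : ℤ) : CauchySeq fun n => y (t + k (σ n)) :=
    cauchySeq_iff_tendsto.2 ((hy t).comp hpairs)
  choose ybar hyk using fun t => cauchySeq_tendsto_of_complete (hy_cauchy t)
  have hf_curry : Tendsto (fun (p : ℕ × ℕ) s => f (s + (k (σ p.2) - k (σ p.1))))
      (atTop.curry atTop) (𝓝 f) := by
    refine tendsto_curry_of_iterated (fun n => tendsto_pi_nhds.2 fun s => ?_) hf_back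
    simpa only [add_sub, sub_add_eq_add_sub] using hfk (s - k (σ n))
  have hy_curry (t : ℤ) : Tendsto (fun p : ℕ × ℕ => y (t + (k (σ p.2) - k (σ p.1))))
      (atTop.curry atTop) (𝓝 (y t)) := by
    have hshift : Tendsto (fun p : ℕ × ℕ => (k (σ p.2) - k (σ p.1), (0 : ℤ)))
        (atTop.curry atTop) (translateUniformity f) :=
      tendsto_comap_iff.2 <| by
        simpa only [Function.comp_def, add_zero] using Uniform.tendsto_nhds_left.1 hf_curry
    simpa only [Uniform.tendsto_nhds_left, Function.comp_def, add_zero] using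
      (hy t).comp hshift
  refine ⟨σ, ybar, hσ, hyk, fun t => tendsto_iterated_of_curry (fun n => ?_) (hy_curry t)⟩
  simpa only [add_sub, sub_add_eq_add_sub] using hyk (t - k (σ n))

section Metric

variable {X : Type*} [MetricSpace X]

theorem isCompact_closure_range {f : ℤ → X} (hf : DiscreteAlmostAutomorphic f) :
    IsCompact (closure (Set.range f)) := by
  refine IsSeqCompact.isCompact fun u hu => ?_
  have happrox (n : ℕ) : ∃ t, dist (u n) (f t) < 1 / ((n : ℝ) + 1) := by
    obtain ⟨_, ⟨t, rfl⟩, ht⟩ := Metric.mem_closure_iff.1 (hu n) _ Nat.one_div_pos_of_nat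
    exact ⟨t, ht⟩
  choose k hk using happrox
  obtain ⟨σ, fbar, hσ, hfk, -⟩ := hf k
  have hfσ : Tendsto (fun n => f (k (σ n))) atTop (𝓝 (fbar 0)) := by simpa using hfk 0
  have hdist : Tendsto (fun n => dist (f (k (σ n))) (u (σ n))) atTop (𝓝 0) :=
    squeeze_zero (fun _ => dist_nonneg) (fun n => (dist_comm _ _).trans_le (hk (σ n)).le)
      (tendsto_one_div_add_atTop_nhds_zero_nat.comp hσ.tendsto_atTop)
  exact ⟨fbar 0, mem_closure_of_tendsto hfσ (Eventually.of_forall fun n => Set.mem_range_self _),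
    σ, hσ, hfσ.congr_dist hdist⟩

theorem pi {ι : Type*} [Countable ι] {f : ι → ℤ → X}
    (hf : ∀ i, DiscreteAlmostAutomorphic (f i)) :
    DiscreteAlmostAutomorphic fun t i => f i t := by
  intro k
  obtain ⟨a, -, σ, hσ, ha⟩ :=
    (isCompact_univ_pi fun p : ι × ℤ => (hf p.1).isCompact_closure_range).tendsto_subseq
      (x := fun n p => f p.1 (p.2 + k n))
      fun n p _ => subset_closure (Set.mem_range_self _)
  rw [tendsto_pi_nhds] at ha
  exact ⟨σ, fun t i => a (i, t), hσ, fun t => tendsto_pi_nhds.2 fun i => ha (i, t),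
    fun t => tendsto_pi_nhds.2 fun i =>
      (hf i).tendsto_sub_of_tendsto_add (fun s => ha (i, s)) t⟩

theorem equicontinuous_comp {V : Type*} [TopologicalSpace V] {F : ℤ → V → X}
    (hF : ∀ u, DiscreteAlmostAutomorphic fun t => F t u) (hF_equi : Equicontinuous F)
    {v : ℤ → V} (hv : DiscreteAlmostAutomorphic v) :
    DiscreteAlmostAutomorphic fun t => F t (v t) := by
  intro k
  obtain ⟨σ, vbar, hσ, hvk, hvk'⟩ := hv k
  -- Only the countably many arguments `vbar t` and `v t` matter, so one subsequence serves all.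
  obtain ⟨τ, Fbar, hτ, hFk, hFk'⟩ := pi (fun i => hF (Sum.elim vbar v i)) (k ∘ σ)
  simp only [tendsto_pi_nhds, Function.comp_apply] at hFk hFk'
  refine ⟨σ ∘ τ, fun t => Fbar t (.inl t), hσ.comp hτ, fun t => ?_, fun t => ?_⟩
  · have hdist : Tendsto (fun n => dist (F (t + k (σ (τ n))) (vbar t))
        (F (t + k (σ (τ n))) (v (t + k (σ (τ n)))))) atTop (𝓝 0) := by
      refine Metric.tendsto_nhds.2 fun ε hε => ?_
      filter_upwards [((hvk t).comp hτ.tendsto_atTop).eventually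
        (Metric.equicontinuousAt_iff_right.1 (hF_equi (vbar t)) ε hε)] with n hn
      simpa using hn (t + k (σ (τ n)))
    exact (hFk t (.inl t)).congr_dist hdist
  · have hdist : Tendsto (fun n => dist (Fbar (t - k (σ (τ n))) (.inr t))
        (Fbar (t - k (σ (τ n))) (.inl (t - k (σ (τ n)))))) atTop (𝓝 0) := by
      refine Metric.tendsto_nhds.2 fun ε hε => ?_
      filter_upwards [((hvk' t).comp hτ.tendsto_atTop).eventually
        (Metric.equicontinuousAt_iff_right.1 (hF_equi (v t)) (ε / 2) (half_pos hε))] with n hn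
      have hle : dist (Fbar (t - k (σ (τ n))) (.inr t))
          (Fbar (t - k (σ (τ n))) (.inl (t - k (σ (τ n))))) ≤ ε / 2 :=
        le_of_tendsto ((hFk _ _).dist (hFk _ _)) (Eventually.of_forall fun m => (hn _).le)
      simpa using hle.trans_lt (half_lt_self hε)
    exact (hFk' t (.inr t)).congr_dist hdist

end Metric

theorem exists_norm_le {E : Type*} [NormedAddCommGroup E] {f : ℤ → E}
    (hf : DiscreteAlmostAutomorphic f) : ∃ C, ∀ t, ‖f t‖ ≤ C := by
  obtain ⟨C, hC⟩ := hf.isCompact_closure_range.isBounded.exists_norm_le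
  exact ⟨C, fun t => hC _ (subset_closure (Set.mem_range_self t))⟩

end DiscreteAlmostAutomorphic

section Dichotomy

variable {𝕜 E : Type*} [NontriviallyNormedField 𝕜] [NormedAddCommGroup E] [NormedSpace 𝕜 E]

/-- `x(t+1) = A(t)x(t)` has a dichotomy with summable bounds: `U t s` for `s ≤ t` and `V t s` for
`t ≤ s` are the stable and unstable evolution operators, `X(t)PX(s)⁻¹` and `X(t)(I-P)X(s)⁻¹` when
there is an invertible fundamental matrix `X`. Their norms are bounded by summable sequences in
`|t - s|`, which are geometric for an exponential dichotomy; `c` starts at distance `1` because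
`V t t` does not enter Green's sum. The values of `U` and `V` at other pairs are irrelevant. -/
structure IsSummableDichotomy (A : ℤ → E →L[𝕜] E) (U V : ℤ → ℤ → E →L[𝕜] E) (b c : ℕ → ℝ) :
    Prop where
  mul_stable {t s : ℤ} : s ≤ t → A t * U t s = U (t + 1) s
  stable_mul {t s : ℤ} : s < t → U t (s + 1) * A s = U t s
  mul_unstable {t s : ℤ} : t < s → A t * V t s = V (t + 1) s
  unstable_mul {t s : ℤ} : t ≤ s → V t (s + 1) * A s = V t s
  stable_add_unstable (t : ℤ) : U t t + V t t = 1
  norm_stable_le (t : ℤ) (m : ℕ) : ‖U t (t - m)‖ ≤ b m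
  norm_unstable_le (t : ℤ) (m : ℕ) : ‖V t (t + m + 1)‖ ≤ c m
  summable_stable : Summable b
  summable_unstable : Summable c

/-- Green's sum `∑_{j<t} U(t,j+1) f(j) - ∑_{j≥t} V(t,j+1) f(j)`, which is the bounded solution of
`y(t+1) = A(t)y(t) + f(t)`; the sums run over `ℕ` via `j = t - 1 - m` and `j = t + m`. -/
noncomputable def greenSum (U V : ℤ → ℤ → E →L[𝕜] E) (f : ℤ → E) (t : ℤ) : E :=
  ∑' m : ℕ, U t (t - m) (f (t - 1 - m)) - ∑' m : ℕ, V t (t + m + 1) (f (t + m))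

theorem isSummableDichotomy_of_exponential {A X Xinv : ℤ → E →L[𝕜] E} {P : E →L[𝕜] E}
    (hX : ∀ t, X (t + 1) = A t * X t) (hXinv : ∀ t, X t * Xinv t = 1)
    (hXinv' : ∀ t, Xinv t * X t = 1) {α₁ α₂ β₁ β₂ : ℝ} (hα₁ : 0 < α₁) (hα₂ : 0 < α₂)
    (hstable : ∀ s t, s ≤ t → ‖X t * P * Xinv s‖ ≤ β₁ * (1 + α₁) ^ (s - t))
    (hunstable : ∀ s t, t ≤ s → ‖X t * (1 - P) * Xinv s‖ ≤ β₂ * (1 + α₂) ^ (t - s)) :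
    IsSummableDichotomy A (fun t s => X t * P * Xinv s) (fun t s => X t * (1 - P) * Xinv s)
      (fun m => β₁ * (1 + α₁)⁻¹ ^ m) (fun m => β₂ * (1 + α₂)⁻¹ ^ (m + 1)) := by
  have hXinv_mul (s : ℤ) : Xinv (s + 1) * A s = Xinv s := calc
    Xinv (s + 1) * A s = Xinv (s + 1) * (A s * X s) * Xinv s := by
      rw [mul_assoc, mul_assoc, hXinv, mul_one]
    _ = Xinv s := by rw [← hX, hXinv', one_mul]
  have hgeom {α : ℝ} (hα : 0 < α) : Summable fun m : ℕ => (1 + α)⁻¹ ^ m :=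
    summable_geometric_of_lt_one (by positivity) (inv_lt_one_of_one_lt₀ (by linarith))
  exact
    { mul_stable := fun _ => by simp only [hX, mul_assoc]
      stable_mul := fun _ => by rw [mul_assoc, hXinv_mul]
      mul_unstable := fun _ => by simp only [hX, mul_assoc]
      unstable_mul := fun _ => by rw [mul_assoc, hXinv_mul]
      stable_add_unstable := fun t => by
        rw [← add_mul, ← mul_add, add_sub_cancel, mul_one, hXinv]
      norm_stable_le := fun t m => by
        have h := hstable (t - m) t (by lia)
        rwa [sub_sub_cancel_left, zpow_neg, zpow_natCast, ← inv_pow] at h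
      norm_unstable_le := fun t m => by
        have h := hunstable (t + m + 1) t (by lia)
        rwa [show t - (t + m + 1) = -((m + 1 : ℕ) : ℤ) by push_cast; ring, zpow_neg,
          zpow_natCast, ← inv_pow] at h
      summable_stable := (hgeom hα₁).mul_left β₁
      summable_unstable := ((summable_nat_add_iff 1).2 (hgeom hα₂)).mul_left β₂ }

namespace IsSummableDichotomy

variable {A : ℤ → E →L[𝕜] E} {U V : ℤ → ℤ → E →L[𝕜] E} {b c : ℕ → ℝ} {f y w : ℤ → E} {C M : ℝ}

theorem translate (h : IsSummableDichotomy A U V b c) (k : ℤ) :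
    IsSummableDichotomy (fun t => A (t + k)) (fun t s => U (t + k) (s + k))
      (fun t s => V (t + k) (s + k)) b c where
  mul_stable hst := by
    simpa only [add_right_comm] using h.mul_stable (add_le_add_left hst k)
  stable_mul hst := by
    simpa only [add_right_comm] using h.stable_mul (add_lt_add_left hst k)
  mul_unstable hts := by
    simpa only [add_right_comm] using h.mul_unstable (add_lt_add_left hts k)
  unstable_mul hts := by
    simpa only [add_right_comm] using h.unstable_mul (add_le_add_left hts k)
  stable_add_unstable t := h.stable_add_unstable (t + k)
  norm_stable_le t m := by
    simpa only [sub_add_eq_add_sub] using h.norm_stable_le (t + k) m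
  norm_unstable_le t m := by
    simpa only [add_right_comm] using h.norm_unstable_le (t + k) m
  summable_stable := h.summable_stable
  summable_unstable := h.summable_unstable

theorem norm_stable_apply_le (h : IsSummableDichotomy A U V b c) (t : ℤ) (m : ℕ) {v : E}
    (hv : ‖v‖ ≤ M) : ‖U t (t - m) v‖ ≤ b m * M :=
  (U t (t - m)).le_of_opNorm_le_of_le (h.norm_stable_le t m) hv

theorem norm_unstable_apply_le (h : IsSummableDichotomy A U V b c) (t : ℤ) (m : ℕ) {v : E}
    (hv : ‖v‖ ≤ M) : ‖V t (t + m + 1) v‖ ≤ c m * M :=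
  (V t (t + m + 1)).le_of_opNorm_le_of_le (h.norm_unstable_le t m) hv

theorem norm_greenSum_le (h : IsSummableDichotomy A U V b c) (hf : ∀ t, ‖f t‖ ≤ M) (t : ℤ) :
    ‖greenSum U V f t‖ ≤ (∑' m, b m * M) + ∑' m, c m * M :=
  (norm_sub_le _ _).trans <| add_le_add
    (tsum_of_norm_bounded (h.summable_stable.mul_right M).hasSum
      fun m => h.norm_stable_apply_le t m (hf _))
    (tsum_of_norm_bounded (h.summable_unstable.mul_right M).hasSum
      fun m => h.norm_unstable_apply_le t m (hf _))

theorem eq_zero_of_bounded (h : IsSummableDichotomy A U V b c)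
    (hw : ∀ t, w (t + 1) = A t (w t)) (hC : ∀ t, ‖w t‖ ≤ C) (t : ℤ) : w t = 0 := by
  have hU (m : ℕ) : U t (t - m) (w (t - m)) = U t t (w t) := by
    induction m with
    | zero => simp
    | succ m ih =>
      rw [← ih, ← h.stable_mul (by lia), mul_apply_eq_comp, ← hw]
      push_cast
      rw [← sub_sub, sub_add_cancel]
  have hV (m : ℕ) : V t (t + m) (w (t + m)) = V t t (w t) := by
    induction m with
    | zero => simp
    | succ m ih =>
      rw [← ih, ← h.unstable_mul (s := t + m) (by lia), mul_apply_eq_comp, ← hw]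
      push_cast
      rw [add_assoc]
  have hU_zero : U t t (w t) = 0 := by
    have hlim : Tendsto (fun m => b m * C) atTop (𝓝 0) := by
      simpa using h.summable_stable.tendsto_atTop_zero.mul_const C
    refine norm_le_zero_iff.1 (ge_of_tendsto' hlim fun m => ?_)
    rw [← hU m]
    exact h.norm_stable_apply_le t m (hC _)
  have hV_zero : V t t (w t) = 0 := by
    have hlim : Tendsto (fun m => c m * C) atTop (𝓝 0) := by
      simpa using h.summable_unstable.tendsto_atTop_zero.mul_const C
    refine norm_le_zero_iff.1 (ge_of_tendsto' hlim fun m => ?_)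
    rw [← hV (m + 1), Nat.cast_succ, ← add_assoc]
    exact h.norm_unstable_apply_le t m (hC _)
  calc w t = (U t t + V t t) (w t) := by rw [h.stable_add_unstable]; rfl
    _ = 0 := by rw [add_apply, hU_zero, hV_zero, add_zero]

variable [CompleteSpace E]

theorem summable_stable_apply (h : IsSummableDichotomy A U V b c) (hf : ∀ t, ‖f t‖ ≤ M) (t : ℤ) :
    Summable fun m : ℕ => U t (t - m) (f (t - 1 - m)) :=
  .of_norm_bounded (h.summable_stable.mul_right M) fun m => h.norm_stable_apply_le t m (hf _)

theorem summable_unstable_apply (h : IsSummableDichotomy A U V b c) (hf : ∀ t, ‖f t‖ ≤ M)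
    (t : ℤ) : Summable fun m : ℕ => V t (t + m + 1) (f (t + m)) :=
  .of_norm_bounded (h.summable_unstable.mul_right M) fun m => h.norm_unstable_apply_le t m (hf _)

theorem greenSum_add_one (h : IsSummableDichotomy A U V b c) (hf : ∀ t, ‖f t‖ ≤ M) (t : ℤ) :
    greenSum U V f (t + 1) = A t (greenSum U V f t) + f t := by
  have hstable : ∑' m : ℕ, U (t + 1) (t + 1 - m) (f (t + 1 - 1 - m))
      = U (t + 1) (t + 1) (f t) + A t (∑' m : ℕ, U t (t - m) (f (t - 1 - m))) := by
    rw [(h.summable_stable_apply hf (t + 1)).tsum_eq_zero_add,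
      (A t).map_tsum (h.summable_stable_apply hf t)]
    congr 1
    · simp
    · refine tsum_congr fun m => ?_
      rw [← mul_apply_eq_comp, h.mul_stable (by lia)]
      push_cast
      ring_nf
  have hunstable : A t (∑' m : ℕ, V t (t + m + 1) (f (t + m)))
      = V (t + 1) (t + 1) (f t) + ∑' m : ℕ, V (t + 1) (t + 1 + m + 1) (f (t + 1 + m)) := by
    rw [(h.summable_unstable_apply hf t).tsum_eq_zero_add, map_add,
      (A t).map_tsum ((summable_nat_add_iff 1).2 (h.summable_unstable_apply hf t))]
    congr 1
    · rw [← mul_apply_eq_comp, h.mul_unstable (by lia)]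
      simp
    · refine tsum_congr fun m => ?_
      rw [← mul_apply_eq_comp, h.mul_unstable (by lia)]
      push_cast
      ring_nf
  have hsplit : U (t + 1) (t + 1) (f t) + V (t + 1) (t + 1) (f t) = f t := by
    rw [← add_apply, h.stable_add_unstable]; rfl
  calc greenSum U V f (t + 1)
      = A t (∑' m : ℕ, U t (t - m) (f (t - 1 - m))) - A t (∑' m : ℕ, V t (t + m + 1) (f (t + m)))
          + (U (t + 1) (t + 1) (f t) + V (t + 1) (t + 1) (f t)) := by
        rw [greenSum, hstable, hunstable]; abel
    _ = A t (greenSum U V f t) + f t := by rw [hsplit, greenSum, map_sub]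

theorem eq_greenSum_of_bounded (h : IsSummableDichotomy A U V b c) (hf : ∀ t, ‖f t‖ ≤ M)
    (hy : ∀ t, y (t + 1) = A t (y t) + f t) (hC : ∀ t, ‖y t‖ ≤ C) : y = greenSum U V f := by
  refine funext fun t => sub_eq_zero.1 <| h.eq_zero_of_bounded
    (w := fun t => y t - greenSum U V f t) (fun t => ?_)
    (fun t => (norm_sub_le _ _).trans (add_le_add (hC t) (h.norm_greenSum_le hf t))) t
  rw [hy, h.greenSum_add_one hf, add_sub_add_right_eq_sub, map_sub]

theorem tendsto_zero_of_tendsto_forcing {ι : Type*} {l : Filter ι} {A : ι → ℤ → E →L[𝕜] E}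
    {U V : ι → ℤ → ℤ → E →L[𝕜] E} (h : ∀ i, IsSummableDichotomy (A i) (U i) (V i) b c)
    {y f : ι → ℤ → E} (hy : ∀ i t, y i (t + 1) = A i t (y i t) + f i t)
    (hC : ∀ i t, ‖y i t‖ ≤ C) (hM : ∀ i t, ‖f i t‖ ≤ M)
    (hf : ∀ t, Tendsto (fun i => f i t) l (𝓝 0)) (t : ℤ) :
    Tendsto (fun i => y i t) l (𝓝 0) := by
  rcases isEmpty_or_nonempty ι with _ | ⟨⟨i₀⟩⟩
  · exact tendsto_of_isEmpty
  have hterm {T : ι → E →L[𝕜] E} {a : ℝ} (hT : ∀ i, ‖T i‖ ≤ a) (s : ℤ) :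
      Tendsto (fun i => T i (f i s)) l (𝓝 0) :=
    squeeze_zero_norm (fun i => (T i).le_of_opNorm_le (hT i) _)
      (by simpa using (hf s).norm.const_mul a)
  have hstable : Tendsto (fun i => ∑' m : ℕ, U i t (t - m) (f i (t - 1 - m))) l
      (𝓝 (∑' _ : ℕ, 0)) :=
    tendsto_tsum_of_dominated_convergence ((h i₀).summable_stable.mul_right M)
      (fun m => hterm (fun i => (h i).norm_stable_le t m) _)
      (.of_forall fun i m => (h i).norm_stable_apply_le t m (hM i _))
  have hunstable : Tendsto (fun i => ∑' m : ℕ, V i t (t + m + 1) (f i (t + m))) l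
      (𝓝 (∑' _ : ℕ, 0)) :=
    tendsto_tsum_of_dominated_convergence ((h i₀).summable_unstable.mul_right M)
      (fun m => hterm (fun i => (h i).norm_unstable_le t m) _)
      (.of_forall fun i m => (h i).norm_unstable_apply_le t m (hM i _))
  have hgreen : ∀ i, y i = greenSum (U i) (V i) (f i) := fun i =>
    (h i).eq_greenSum_of_bounded (hM i) (hy i) (hC i)
  simpa only [hgreen, greenSum, tsum_zero, sub_zero] using hstable.sub hunstable

theorem tendsto_sub_of_tendsto_coefficients {ι : Type*} {l : Filter ι}
    {A B : ι → ℤ → E →L[𝕜] E} {U V : ι → ℤ → ℤ → E →L[𝕜] E}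
    (h : ∀ i, IsSummableDichotomy (A i) (U i) (V i) b c) {y z f g : ι → ℤ → E} {a : ℝ}
    (hy : ∀ i t, y i (t + 1) = A i t (y i t) + f i t)
    (hz : ∀ i t, z i (t + 1) = B i t (z i t) + g i t)
    (hA : ∀ i t, ‖A i t‖ ≤ a) (hB : ∀ i t, ‖B i t‖ ≤ a) (hyC : ∀ i t, ‖y i t‖ ≤ C)
    (hzC : ∀ i t, ‖z i t‖ ≤ C) (hf : ∀ i t, ‖f i t‖ ≤ M) (hg : ∀ i t, ‖g i t‖ ≤ M)
    (hAB : ∀ t, Tendsto (fun i => A i t - B i t) l (𝓝 0))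
    (hfg : ∀ t, Tendsto (fun i => f i t - g i t) l (𝓝 0)) (t : ℤ) :
    Tendsto (fun i => y i t - z i t) l (𝓝 0) := by
  have hdiff (i : ι) (t : ℤ) : y i (t + 1) - z i (t + 1) =
      A i t (y i t - z i t) + ((A i t - B i t) (z i t) + (f i t - g i t)) := by
    rw [hy, hz, map_sub, sub_apply]
    abel
  have hforcing_le (i : ι) (t : ℤ) :
      ‖(A i t - B i t) (z i t) + (f i t - g i t)‖ ≤ (a + a) * C + (M + M) :=
    norm_add_le_of_le
      ((A i t - B i t).le_of_opNorm_le_of_le (norm_sub_le_of_le (hA i t) (hB i t)) (hzC i t))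
      (norm_sub_le_of_le (hf i t) (hg i t))
  have hforcing_lim (t : ℤ) :
      Tendsto (fun i => (A i t - B i t) (z i t) + (f i t - g i t)) l (𝓝 0) := by
    have hAB_z : Tendsto (fun i => (A i t - B i t) (z i t)) l (𝓝 0) :=
      squeeze_zero_norm (fun i => (A i t - B i t).le_opNorm_of_le (hzC i t))
        (by simpa only [norm_zero, zero_mul] using (hAB t).norm.mul_const C)
    simpa only [add_zero] using hAB_z.add (hfg t)
  exact tendsto_zero_of_tendsto_forcing h hdiff
    (fun i t => norm_sub_le_of_le (hyC i t) (hzC i t)) hforcing_le hforcing_lim t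

theorem discreteAlmostAutomorphic_greenSum (h : IsSummableDichotomy A U V b c)
    (hA : DiscreteAlmostAutomorphic A) (hf : DiscreteAlmostAutomorphic f) :
    DiscreteAlmostAutomorphic (greenSum U V f) := by
  obtain ⟨a, ha⟩ := hA.exists_norm_le
  obtain ⟨M, hM⟩ := hf.exists_norm_le
  have hy_le := h.norm_greenSum_le hM
  have hy_shift (k t : ℤ) : greenSum U V f (t + 1 + k) =
      A (t + k) (greenSum U V f (t + k)) + f (t + k) := by
    rw [add_right_comm, h.greenSum_add_one hM]
  have hlim (t : ℤ) := tendsto_sub_translateUniformity (fun t => (A t, f t)) t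
  refine (hA.prodMk hf).of_tendsto_translateUniformity fun t => ?_
  rw [uniformity_eq_comap_nhds_zero, tendsto_comap_iff]
  exact tendsto_sub_of_tendsto_coefficients (fun p : ℤ × ℤ => h.translate p.2)
    (y := fun p t => greenSum U V f (t + p.2)) (z := fun p t => greenSum U V f (t + p.1))
    (fun p => hy_shift p.2) (fun p => hy_shift p.1) (fun _ _ => ha _) (fun _ _ => ha _)
    (fun _ _ => hy_le _) (fun _ _ => hy_le _) (fun _ _ => hM _) (fun _ _ => hM _)
    (fun t => (hlim t).fst_nhds) (fun t => (hlim t).snd_nhds) t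

end IsSummableDichotomy

end Dichotomy

section Equicontinuity

variable {ι V W Y : Type*} [SeminormedAddCommGroup V] [SeminormedAddCommGroup W]
  [SeminormedAddCommGroup Y] {K : ℝ}

theorem equicontinuous_of_norm_sub_le {F : ι → V → Y}
    (hF : ∀ i u v, ‖F i u - F i v‖ ≤ K * ‖u - v‖) : Equicontinuous F :=
  Metric.equicontinuous_of_continuity_modulus (K * ·)
    (Continuous.tendsto' (by fun_prop) _ _ (mul_zero K)) F
    fun u v i => by simpa only [dist_eq_norm] using hF i u v

theorem equicontinuous_uncurry_of_norm_sub_le {F : ι → V → W → Y}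
    (hF : ∀ i u v w z, ‖F i u w - F i v z‖ ≤ K * (‖u - v‖ + ‖w - z‖)) :
    Equicontinuous fun i (p : V × W) => F i p.1 p.2 := fun p₀ =>
  Metric.equicontinuousAt_of_continuity_modulus
    (fun p => K * (‖p₀.1 - p.1‖ + ‖p₀.2 - p.2‖))
    (Continuous.tendsto' (by fun_prop) _ _ (by simp)) _
    (.of_forall fun p i => by simpa only [dist_eq_norm] using hF i p₀.1 p.1 p₀.2 p.2)

end Equicontinuity

theorem Hmap_eq_add_greenSum {n : ℕ} (A X Xinv : ℤ → (Fin n → ℝ) →L[ℝ] (Fin n → ℝ))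
    (P : (Fin n → ℝ) →L[ℝ] (Fin n → ℝ)) (g : ℤ → ℤ) (Q : ℤ → (Fin n → ℝ) → Fin n → ℝ)
    (G : ℤ → (Fin n → ℝ) → (Fin n → ℝ) → Fin n → ℝ) (x : ℤ → Fin n → ℝ) :
    Hmap A X Xinv P g Q G x = fun t => Q t (x (t - g t)) +
      greenSum (fun t s => X t * P * Xinv s) (fun t s => X t * (1 - P) * Xinv s)
        (Lam A g Q G x) t :=
  funext fun _ => add_sub_assoc _ _ _

theorem stmt_9_general {𝕜 E : Type*} [NontriviallyNormedField 𝕜] [NormedAddCommGroup E]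
    [NormedSpace 𝕜 E] [CompleteSpace E] {A : ℤ → E →L[𝕜] E} {U V : ℤ → ℤ → E →L[𝕜] E}
    {b c : ℕ → ℝ} (hdich : IsSummableDichotomy A U V b c) {g : ℤ → ℤ} {Q : ℤ → E → E}
    {G : ℤ → E → E → E} (hA : DiscreteAlmostAutomorphic A) (hg : DiscreteAlmostAutomorphic g)
    (hQ : ∀ u, DiscreteAlmostAutomorphic fun t => Q t u) (hQ_equi : Equicontinuous Q)
    (hG : ∀ u v, DiscreteAlmostAutomorphic fun t => G t u v)
    (hG_equi : Equicontinuous fun t (p : E × E) => G t p.1 p.2)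
    {x : ℤ → E} (hx : DiscreteAlmostAutomorphic x) :
    DiscreteAlmostAutomorphic fun t => Q t (x (t - g t)) +
      greenSum U V (fun j => (A j - 1) (Q j (x (j - g j))) + G j (x j) (x (j - g j))) t := by
  have hxg := hx.comp_sub hg
  have hQx := DiscreteAlmostAutomorphic.equicontinuous_comp hQ hQ_equi hxg
  have hGx := DiscreteAlmostAutomorphic.equicontinuous_comp (fun p => hG p.1 p.2) hG_equi
    (hx.prodMk hxg)
  have hforcing := ((hA.prodMk hQx).prodMk hGx).continuous_comp
    (φ := fun p => (p.1.1 - 1) p.1.2 + p.2) (by fun_prop)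
  exact (hQx.prodMk (hdich.discreteAlmostAutomorphic_greenSum hA hforcing)).continuous_comp
    continuous_add

/-- Under (A1)–(A4), the operator `H` maps the space of discrete almost
automorphic functions `ℤ → ℝⁿ` into itself. -/
theorem stmt_9 {n : ℕ}
    (A X Xinv : ℤ → (Fin n → ℝ) →L[ℝ] (Fin n → ℝ)) (t₀ : ℤ)
    (g : ℤ → ℤ) (hg0 : ∀ t : ℤ, 0 ≤ g t)
    (Q : ℤ → (Fin n → ℝ) → Fin n → ℝ)
    (G : ℤ → (Fin n → ℝ) → (Fin n → ℝ) → Fin n → ℝ)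
    (E₁ E₂ : ℝ) (hE₁ : 0 < E₁) (hE₂ : 0 < E₂)
    -- (A1)
    (hA_aa : DiscreteAlmostAutomorphic A)
    (hg_aa : DiscreteAlmostAutomorphic g)
    (hQ_aa : ∀ u : Fin n → ℝ, DiscreteAlmostAutomorphic fun t => Q t u)
    (hG_aa : ∀ u v : Fin n → ℝ, DiscreteAlmostAutomorphic fun t => G t u v)
    -- (A2)
    (hQ_lip : ∀ (t : ℤ) (u v : Fin n → ℝ), ‖Q t u - Q t v‖ ≤ E₁ * ‖u - v‖)
    -- (A3)
    (hG_lip : ∀ (t : ℤ) (u v w z : Fin n → ℝ),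
      ‖G t u w - G t v z‖ ≤ E₂ * (‖u - v‖ + ‖w - z‖))
    -- (A4): exponential dichotomy
    (hX : ∀ t : ℤ, X (t + 1) = A t * X t) (hX0 : X t₀ = 1)
    (hXinv : ∀ t : ℤ, X t * Xinv t = 1) (hXinv' : ∀ t : ℤ, Xinv t * X t = 1)
    (P : (Fin n → ℝ) →L[ℝ] (Fin n → ℝ)) (hP : P * P = P)
    (α₁ α₂ β₁ β₂ : ℝ) (hα₁ : 0 < α₁) (hα₂ : 0 < α₂) (hβ₁ : 0 < β₁) (hβ₂ : 0 < β₂)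
    (hd₁ : ∀ s t : ℤ, s ≤ t → ‖X t * P * Xinv s‖ ≤ β₁ * (1 + α₁) ^ (s - t))
    (hd₂ : ∀ s t : ℤ, t ≤ s → ‖X t * (1 - P) * Xinv s‖ ≤ β₂ * (1 + α₂) ^ (t - s))
    (x : ℤ → Fin n → ℝ) (hx : DiscreteAlmostAutomorphic x) :
    DiscreteAlmostAutomorphic (Hmap A X Xinv P g Q G x) := by
  rw [Hmap_eq_add_greenSum]
  exact stmt_9_general (isSummableDichotomy_of_exponential hX hXinv hXinv' hα₁ hα₂ hd₁ hd₂) hA_aa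
    hg_aa hQ_aa (equicontinuous_of_norm_sub_le hQ_lip) hG_aa
    (equicontinuous_uncurry_of_norm_sub_le hG_lip) hx
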